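/- (Overall monotonicity.) Let ((a_i,b_i))_{i=0}^{s} be an excursion of the BCZ map with s ≥ 4, and set ζ_m := Σ_{i=0}^{m−1} (k̂(a_i,b_i) − 3) for 1 ≤ m ≤ s. Then for every m with 2 ≤ m ≤ s−2, ζ_{s−1} < ζ_m < ζ_1. -/

import Mathlib

/-- The BCZ map `T(a,b) = (b, ⌊(1+a)/b⌋·b − a)`. -/
noncomputable def bczT (p : ℝ × ℝ) : ℝ × ℝ :=
  (p.2, (⌊(1 + p.1) / p.2⌋ : ℝ) * p.2 - p.1)

/-- `k̂(a,b) = (⌊(1+a)/b⌋ + ⌊(1+b)/a⌋)/2`. -/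
noncomputable def khat (p : ℝ × ℝ) : ℝ :=
  ((⌊(1 + p.1) / p.2⌋ : ℝ) + (⌊(1 + p.2) / p.1⌋ : ℝ)) / 2

/-- The Farey triangle Ω. -/
def fareyTriangle : Set (ℝ × ℝ) :=
  {p | 0 < p.1 ∧ p.1 ≤ 1 ∧ 0 < p.2 ∧ p.2 ≤ 1 ∧ 1 < p.1 + p.2}

/-- An excursion of the BCZ map: points `p 0, …, p s` of Ω, consecutive under `T`,
with all intermediate x-coordinates larger than those of both endpoints. -/
def IsExcursion (p : ℕ → ℝ × ℝ) (s : ℕ) : Prop :=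
  1 ≤ s ∧ (∀ i ≤ s, p i ∈ fareyTriangle) ∧
  (∀ i < s, p (i + 1) = bczT (p i)) ∧
  (∀ i, 0 < i → i < s → (p 0).1 < (p i).1 ∧ (p s).1 < (p i).1)

/-- The golden ratio area Δ of the moduli space of excursions. -/
noncomputable def goldenArea : Set (ℝ × ℝ) :=
  {p | 0 < p.1 ∧ p.1 ≤ 1 ∧ 0 < p.2 ∧ p.2 ≤ 1 ∧
    (Real.sqrt 5 - 1) / 2 ≤ p.2 / p.1 ∧ p.2 / p.1 ≤ (Real.sqrt 5 + 1) / 2}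

/-- `A_n = Σ_{k=1}^n φ(k)`, the number of Farey fractions in `(0,1]` of order `n`. -/
def fareyLen (n : ℕ) : ℕ := ∑ k ∈ Finset.Icc 1 n, Nat.totient k

/-!
The first coordinates `x 0, …, x s` of an excursion behave like normalized denominators of
consecutive Farey fractions: with `K i = ⌊(1 + b_i) / a_i⌋` they satisfy
`K i * x i = x (i - 1) + x (i + 1)`. If `x` exceeds its end values inside an arc, its minimum there
is the sum of the end values, so the arc splits at the minimum into two arcs of the same kind, and
recursively the whole excursion is triangulated by mediants. In a triangle with apex `k` over the
edge `i — j` one has `K k = 1 + N (x k) (x i) + N (x k) (x j)`, where `N u v = ⌊(1 - v) / u⌋`, and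
by induction the sum of `K - 3` strictly inside an arc `i — j` is
`-(N (x i) (x j) + N (x j) (x i))`. Partial sums are controlled by the same recursion. Since
`2 (k̂_i - 3) = (K i - 3) + (K (i + 1) - 3)`, comparing `ζ_m` with `ζ_1` amounts to a bound on
`2 ∑_{0 < t < m} (K t - 3) + K m`, and comparing it with `ζ_{s-1}` is the mirror image.
-/

section MediantCount

variable {R : Type*} [Field R] [LinearOrder R] [IsStrictOrderedRing R] [FloorRing R] {u u' v v' : R}

/-- The number of times `u` can be added to `v` without exceeding `1`, for `0 < u` and `v ≤ 1`.
Beside an edge with end heights `u`, `v`, it counts the iterated mediants `v + u, v + 2u, …` of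
height at most `1`. -/
def mediantCount (u v : R) : ℤ := ⌊(1 - v) / u⌋

theorem mediantCount_add_left (hu : u ≠ 0) : mediantCount u (u + v) = mediantCount u v - 1 := by
  have shift : (1 - (u + v)) / u = (1 - v) / u - 1 := by field_simp; ring
  rw [mediantCount, shift, Int.floor_sub_one, mediantCount]

theorem mediantCount_add_right (hu : u ≠ 0) : mediantCount u (v + u) = mediantCount u v - 1 := by
  rw [add_comm, mediantCount_add_left hu]

theorem mediantCount_eq_zero (hu : 0 < u) (hv : v ≤ 1) (h : 1 < u + v) : mediantCount u v = 0 :=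
  Int.floor_eq_zero_iff.mpr
    ⟨div_nonneg (sub_nonneg.mpr hv) hu.le, (div_lt_one hu).mpr (sub_lt_iff_lt_add.mpr h)⟩

theorem mediantCount_nonneg (hu : 0 < u) (hv : v ≤ 1) : 0 ≤ mediantCount u v :=
  Int.floor_nonneg.mpr (div_nonneg (sub_nonneg.mpr hv) hu.le)

theorem mediantCount_pos (hu : 0 < u) (h : u + v ≤ 1) : 0 < mediantCount u v :=
  Int.floor_pos.mpr ((one_le_div hu).mpr (le_sub_iff_add_le.mpr h))

theorem mediantCount_le_of_le_left (hu : 0 < u) (h : u ≤ u') (hv : v ≤ 1) :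
    mediantCount u' v ≤ mediantCount u v :=
  Int.floor_le_floor (div_le_div_of_nonneg_left (sub_nonneg.mpr hv) hu h)

theorem mediantCount_le_of_le_right (hu : 0 < u) (h : v ≤ v') :
    mediantCount u v' ≤ mediantCount u v :=
  Int.floor_le_floor (div_le_div_of_nonneg_right (sub_le_sub_left h 1) hu.le)

end MediantCount

section InteriorSum

/-- The sum of `K t - 3` over the indices `t` strictly between `i` and `j`. -/
def interiorSum (K : ℕ → ℤ) (i j : ℕ) : ℤ := ∑ t ∈ Finset.Ico (i + 1) j, (K t - 3)

variable {K : ℕ → ℤ} {i j k s m : ℕ}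

theorem interiorSum_self_succ : interiorSum K i (i + 1) = 0 := by simp [interiorSum]

theorem interiorSum_split (hik : i < k) (hkj : k < j) :
    interiorSum K i j = interiorSum K i k + (K k - 3) + interiorSum K k j := by
  rw [interiorSum, ← Finset.sum_Ico_consecutive _ hik hkj.le, Finset.sum_eq_sum_Ico_succ_bot hkj,
    ← add_assoc, interiorSum, interiorSum]

theorem interiorSum_reflect (hm : m ≤ s) :
    interiorSum (fun t => K (s - t)) 0 (s - m) = interiorSum K m s := by
  have reflect := Finset.sum_Ico_reflect (fun t => K t - 3) 1 (show s - m ≤ s + 1 by omega)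
  rwa [show s + 1 - (s - m) = m + 1 by omega, Nat.add_sub_cancel] at reflect

theorem sum_range_eq_add_interiorSum (him : i < m) :
    ∑ t ∈ Finset.range m, (K t - 3) =
      ∑ t ∈ Finset.range i, (K t - 3) + (K i - 3) + interiorSum K i m := by
  rw [← Finset.sum_range_succ, interiorSum, Finset.sum_range_add_sum_Ico _ him]

end InteriorSum

/-- Adjacency of indices generated from consecutive ones by insertion of mediants: a new edge
`i — j` closes a triangle whose apex `k`, strictly between, has height `x k = x i + x j`. -/
inductive MediantAdj {R : Type*} [Add R] (x : ℕ → R) : ℕ → ℕ → Prop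
  | succ (i : ℕ) : MediantAdj x i (i + 1)
  | mediant {i k j : ℕ} : MediantAdj x i k → MediantAdj x k j → x k = x i + x j → MediantAdj x i j

theorem MediantAdj.lt {R : Type*} [Add R] {x : ℕ → R} {i j : ℕ} (h : MediantAdj x i j) : i < j := by
  induction h with
  | succ i => exact i.lt_succ_self
  | mediant _ _ _ hik hkj => exact hik.trans hkj

/-- A finite sequence of heights `x 0, …, x s` behaving like the denominators, divided by `n`, of
consecutive Farey fractions of order `n`. Here `K i` is the index of `x i`, constrained only for
`0 < i < s`. -/
structure IsFareyChain {R : Type*} [Ring R] [LinearOrder R] (x : ℕ → R) (K : ℕ → ℤ) (s : ℕ) :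
    Prop where
  pos : ∀ i ≤ s, 0 < x i
  le_one : ∀ i ≤ s, x i ≤ 1
  one_lt_add : ∀ i < s, 1 < x i + x (i + 1)
  index_mul : ∀ i, i + 2 ≤ s → (K (i + 1) : R) * x (i + 1) = x i + x (i + 2)

namespace IsFareyChain

section Ring

variable {R : Type*} [Ring R] [LinearOrder R] {x : ℕ → R} {K : ℕ → ℤ} {s i j : ℕ}

theorem reverse (hx : IsFareyChain x K s) :
    IsFareyChain (fun i => x (s - i)) (fun i => K (s - i)) s where
  pos i _ := hx.pos _ (s.sub_le i)
  le_one i _ := hx.le_one _ (s.sub_le i)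
  one_lt_add i hi := by
    have sum := hx.one_lt_add (s - (i + 1)) (by omega)
    rwa [show s - (i + 1) + 1 = s - i by omega, add_comm] at sum
  index_mul i hi := by
    have recurrence := hx.index_mul (s - (i + 2)) (by omega)
    rwa [show s - (i + 2) + 1 = s - (i + 1) by omega, show s - (i + 2) + 2 = s - i by omega,
      add_comm (x _)] at recurrence

theorem add_le_one (hx : IsFareyChain x K s) (h : MediantAdj x i j) (hij : i + 1 < j)
    (hj : j ≤ s) : x i + x j ≤ 1 := by
  cases h with
  | succ => omega
  | mediant _ hkj apex => exact apex ▸ hx.le_one _ (hkj.lt.le.trans hj)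

theorem index_pos [IsStrictOrderedRing R] (hx : IsFareyChain x K s) (hi : i + 2 ≤ s) :
    0 < K (i + 1) := by
  have product_pos : 0 < (K (i + 1) : R) * x (i + 1) := by
    rw [hx.index_mul i hi]
    exact add_pos (hx.pos i (by omega)) (hx.pos (i + 2) hi)
  exact Int.cast_pos.mp ((mul_pos_iff_of_pos_right (hx.pos (i + 1) (by omega))).mp product_pos)

end Ring

variable {R : Type*} [Field R] [LinearOrder R] [IsStrictOrderedRing R] [FloorRing R]
  {x : ℕ → R} {K : ℕ → ℤ} {s i j k m : ℕ}

theorem succ_eq (hx : IsFareyChain x K s) (h : MediantAdj x i j) (hj : j ≤ s) :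
    x (i + 1) = x j + mediantCount (x i) (x j) * x i := by
  induction h with
  | succ i =>
    rw [mediantCount_eq_zero (hx.pos i (by omega)) (hx.le_one _ hj) (hx.one_lt_add i hj)]
    simp
  | @mediant i k j hik hkj apex ih _ =>
    have hk : k ≤ s := hkj.lt.le.trans hj
    rw [ih hk, apex, mediantCount_add_left (hx.pos i (hik.lt.le.trans hk)).ne']
    push_cast
    ring

theorem pred_eq (hx : IsFareyChain x K s) (h : MediantAdj x i j) (hj : j ≤ s) :
    x (j - 1) = x i + mediantCount (x j) (x i) * x j := by
  induction h with
  | succ i =>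
    rw [mediantCount_eq_zero (hx.pos _ hj) (hx.le_one i (by omega))
      (add_comm (x i) _ ▸ hx.one_lt_add i hj)]
    simp
  | @mediant i k j _ _ apex _ ih =>
    rw [ih hj, apex, mediantCount_add_right (hx.pos j hj).ne']
    push_cast
    ring

theorem index_sub_mul_eq_add (hx : IsFareyChain x K s) (hik : MediantAdj x i k)
    (hkj : MediantAdj x k j) (hj : j ≤ s) :
    ((K k - mediantCount (x k) (x i) - mediantCount (x k) (x j) : ℤ) : R) * x k = x i + x j := by
  have left := hx.pred_eq hik (hkj.lt.le.trans hj)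
  have right := hx.succ_eq hkj hj
  obtain ⟨k, rfl⟩ := Nat.exists_eq_add_one.mpr (Nat.zero_lt_of_lt hik.lt)
  have recurrence := hx.index_mul k (by have := hkj.lt; omega)
  rw [Nat.add_sub_cancel] at left
  push_cast
  linear_combination recurrence + left + right

theorem eq_add_of_lt_of_le (hx : IsFareyChain x K s) (hik : MediantAdj x i k)
    (hkj : MediantAdj x k j) (hj : j ≤ s) (hxi : x i < x k) (hxj : x j ≤ x k) :
    x k = x i + x j := by
  have combination := hx.index_sub_mul_eq_add hik hkj hj
  have hk : k ≤ s := hkj.lt.le.trans hj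
  have xk_pos := hx.pos k hk
  have sum_pos : 0 < x i + x j := add_pos (hx.pos i (hik.lt.le.trans hk)) (hx.pos j hj)
  set c := K k - mediantCount (x k) (x i) - mediantCount (x k) (x j)
  have c_pos : 0 < (c : R) := (mul_pos_iff_of_pos_right xk_pos).mp (combination ▸ sum_pos)
  have c_lt_two : (c : R) < 2 := lt_of_mul_lt_mul_right (by linarith) xk_pos.le
  have c_eq_one : c = 1 := by
    have : 0 < c := by exact_mod_cast c_pos
    have : c < 2 := by exact_mod_cast c_lt_two
    omega
  rwa [c_eq_one, Int.cast_one, one_mul] at combination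

theorem index_eq (hx : IsFareyChain x K s) (hik : MediantAdj x i k) (hkj : MediantAdj x k j)
    (apex : x k = x i + x j) (hj : j ≤ s) :
    K k = 1 + mediantCount (x k) (x i) + mediantCount (x k) (x j) := by
  have combination := hx.index_sub_mul_eq_add hik hkj hj
  rw [← apex, mul_eq_right₀ (hx.pos k (hkj.lt.le.trans hj)).ne'] at combination
  have : K k - mediantCount (x k) (x i) - mediantCount (x k) (x j) = 1 := by
    exact_mod_cast combination
  omega

theorem mediantAdj {i j : ℕ} (hx : IsFareyChain x K s) (hij : i < j) (hj : j ≤ s)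
    (above : ∀ t, i < t → t < j → x i < x t ∧ x j ≤ x t) : MediantAdj x i j := by
  obtain rfl | hij' := (Nat.succ_le_of_lt hij).eq_or_lt
  · exact .succ i
  obtain ⟨k, hk, k_min⟩ := (Finset.Ioo i j).exists_min_image x ⟨i + 1, by simp; omega⟩
  obtain ⟨hik, hkj⟩ := Finset.mem_Ioo.mp hk
  have adj_ik : MediantAdj x i k := hx.mediantAdj hik (by omega) fun t hit htk =>
    ⟨(above t hit (htk.trans hkj)).1, k_min t (Finset.mem_Ioo.mpr ⟨hit, htk.trans hkj⟩)⟩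
  -- The first return `l` after `k` to height at most `x k` satisfies `x k = x i + x l`, so
  -- `x l < x k` and minimality forces `l = j`.
  have returns : ∃ l, k < l ∧ x l ≤ x k := ⟨j, hkj, (above k hik hkj).2⟩
  classical
  obtain ⟨l, ⟨hkl, hxl⟩, l_first⟩ : ∃ l, (k < l ∧ x l ≤ x k) ∧ ∀ t < l, ¬(k < t ∧ x t ≤ x k) :=
    ⟨Nat.find returns, Nat.find_spec returns, fun _ => Nat.find_min returns⟩
  have hlj : l ≤ j := not_lt.mp fun hjl => l_first j hjl ⟨hkj, (above k hik hkj).2⟩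
  have adj_kl : MediantAdj x k l := hx.mediantAdj hkl (hlj.trans hj) fun t hkt htl =>
    have hxt : x k < x t := not_le.mp fun hle => l_first t htl ⟨hkt, hle⟩
    ⟨hxt, hxl.trans hxt.le⟩
  have apex : x k = x i + x l :=
    hx.eq_add_of_lt_of_le adj_ik adj_kl (hlj.trans hj) (above k hik hkj).1 hxl
  obtain rfl : l = j := hlj.eq_of_not_lt fun hlj' => by
    have := k_min l (Finset.mem_Ioo.mpr ⟨hik.trans hkl, hlj'⟩)
    have := hx.pos i (by omega)
    linarith
  exact .mediant adj_ik adj_kl apex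
termination_by j - i

theorem interiorSum_eq (hx : IsFareyChain x K s) (h : MediantAdj x i j) (hj : j ≤ s) :
    interiorSum K i j = -(mediantCount (x i) (x j) + mediantCount (x j) (x i)) := by
  induction h with
  | succ i =>
    have sum := hx.one_lt_add i hj
    have hi : i ≤ s := by omega
    rw [mediantCount_eq_zero (hx.pos i hi) (hx.le_one _ hj) sum,
      mediantCount_eq_zero (hx.pos _ hj) (hx.le_one i hi) (add_comm (x i) _ ▸ sum),
      interiorSum_self_succ, add_zero, neg_zero]
  | @mediant i k j hik hkj apex ih_ik ih_kj =>
    have hk : k ≤ s := hkj.lt.le.trans hj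
    rw [interiorSum_split hik.lt hkj.lt, ih_ik hk, ih_kj hj, hx.index_eq hik hkj apex hj, apex,
      mediantCount_add_left (hx.pos i (hik.lt.le.trans hk)).ne',
      mediantCount_add_right (hx.pos j hj).ne']
    ring

theorem two_mul_interiorSum_add_index_apex_le (hx : IsFareyChain x K s) (hik : MediantAdj x i k)
    (hkj : MediantAdj x k j) (apex : x k = x i + x j) (hj : j ≤ s) :
    2 * interiorSum K i k + K k ≤ 2 - 2 * mediantCount (x i) (x k) := by
  have hk : k ≤ s := hkj.lt.le.trans hj
  have xk_pos := hx.pos k hk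
  have count_le : mediantCount (x k) (x j) - 1 ≤ mediantCount (x k) (x i) := by
    rw [← mediantCount_add_left xk_pos.ne']
    exact mediantCount_le_of_le_right xk_pos (by linarith [hx.pos j hj])
  rw [hx.interiorSum_eq hik hk, hx.index_eq hik hkj apex hj]
  linarith

theorem interiorSum_add_index_apex_le (hx : IsFareyChain x K s) (hik : MediantAdj x i k)
    (hkj : MediantAdj x k j) (apex : x k = x i + x j) (hj : j ≤ s) :
    interiorSum K i k + (K k - 3) ≤ -1 := by
  have hk : k ≤ s := hkj.lt.le.trans hj
  have xi_pos := hx.pos i (hik.lt.le.trans hk)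
  have count_le : mediantCount (x k) (x j) ≤ mediantCount (x i) (x j) :=
    mediantCount_le_of_le_left xi_pos (by linarith [hx.pos j hj]) (hx.le_one j hj)
  have shift : mediantCount (x i) (x k) = mediantCount (x i) (x j) - 1 := by
    rw [apex, mediantCount_add_left xi_pos.ne']
  rw [hx.interiorSum_eq hik hk, hx.index_eq hik hkj apex hj]
  linarith

theorem two_mul_interiorSum_add_index_le_two (hx : IsFareyChain x K s) (h : MediantAdj x i j)
    (hj : j ≤ s) (him : i < m) (hmj : m < j) : 2 * interiorSum K i m + K m ≤ 2 := by
  induction h with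
  | succ i => omega
  | @mediant i k j hik hkj apex ih_ik ih_kj =>
    have hk : k ≤ s := hkj.lt.le.trans hj
    rcases lt_trichotomy m k with hmk | rfl | hkm
    · exact ih_ik hk him hmk
    · have := hx.two_mul_interiorSum_add_index_apex_le hik hkj apex hj
      have := mediantCount_nonneg (hx.pos i (hik.lt.le.trans hk)) (hx.le_one m hk)
      linarith
    · have := hx.interiorSum_add_index_apex_le hik hkj apex hj
      have := ih_kj hj hkm hmj
      rw [interiorSum_split hik.lt hkm]
      linarith

theorem two_mul_interiorSum_add_index_nonpos (hx : IsFareyChain x K s) (h : MediantAdj x i j)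
    (hj : j ≤ s) (him : i + 1 < m) (hmj : m < j) : 2 * interiorSum K i m + K m ≤ 0 := by
  induction h with
  | succ i => omega
  | @mediant i k j hik hkj apex ih_ik _ =>
    have hk : k ≤ s := hkj.lt.le.trans hj
    rcases lt_trichotomy m k with hmk | rfl | hkm
    · exact ih_ik hk him hmk
    · have := hx.two_mul_interiorSum_add_index_apex_le hik hkj apex hj
      have := mediantCount_pos (hx.pos i (hik.lt.le.trans hk)) (hx.add_le_one hik him hk)
      linarith
    · have := hx.interiorSum_add_index_apex_le hik hkj apex hj
      have := hx.two_mul_interiorSum_add_index_le_two hkj hj hkm hmj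
      rw [interiorSum_split hik.lt hkm]
      linarith

theorem two_mul_interiorSum_add_index_lt_first (hx : IsFareyChain x K s)
    (above : ∀ t, 0 < t → t < s → x 0 < x t ∧ x s ≤ x t) (hm : 2 ≤ m) (hms : m < s) :
    2 * interiorSum K 0 m + K m < K 1 :=
  (hx.two_mul_interiorSum_add_index_nonpos (hx.mediantAdj (by omega) le_rfl above) le_rfl hm
    hms).trans_lt (hx.index_pos (i := 0) (by omega))

theorem two_mul_interiorSum_add_index_lt_last (hx : IsFareyChain x K s)
    (above : ∀ t, 0 < t → t < s → x 0 ≤ x t ∧ x s < x t) (hm : 0 < m) (hms : m + 2 ≤ s) :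
    2 * interiorSum K m s + K m < K (s - 1) := by
  have above_reverse : ∀ t, 0 < t → t < s → x (s - 0) < x (s - t) ∧ x (s - s) ≤ x (s - t) := by
    intro t ht hts
    simpa using (above (s - t) (by omega) (by omega)).symm
  have reversed := hx.reverse.two_mul_interiorSum_add_index_lt_first above_reverse
    (m := s - m) (by omega) (by omega)
  rwa [interiorSum_reflect (by omega), Nat.sub_sub_self (by omega)] at reversed

end IsFareyChain

/-- The index `k(b, a) = ⌊(1 + b) / a⌋` at the first coordinate of a point `(a, b)`. -/
noncomputable def leftIndex (q : ℝ × ℝ) : ℤ := ⌊(1 + q.2) / q.1⌋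

theorem leftIndex_bczT {q : ℝ × ℝ} (hq : q ∈ fareyTriangle) :
    leftIndex (bczT q) = ⌊(1 + q.1) / q.2⌋ := by
  obtain ⟨_, ha1, hb0, _, hab⟩ := hq
  have quotient (c : ℤ) : (1 + (c * q.2 - q.1)) / q.2 = c + (1 - q.1) / q.2 := by
    field_simp
    ring
  have remainder : ⌊(1 - q.1) / q.2⌋ = 0 := mediantCount_eq_zero hb0 ha1 (add_comm q.1 _ ▸ hab)
  rw [leftIndex, bczT, quotient, Int.floor_intCast_add, remainder, add_zero]

namespace IsExcursion

variable {p : ℕ → ℝ × ℝ} {s i m : ℕ}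

theorem isFareyChain (h : IsExcursion p s) :
    IsFareyChain (fun i => (p i).1) (fun i => leftIndex (p i)) s := by
  obtain ⟨_, mem, orbit, _⟩ := h
  have fst_succ (i : ℕ) (hi : i < s) : (p (i + 1)).1 = (p i).2 := by rw [orbit i hi, bczT]
  refine ⟨fun i hi => (mem i hi).1, fun i hi => (mem i hi).2.1, fun i hi => ?_, fun i hi => ?_⟩
  · rw [fst_succ i hi]
    exact (mem i hi.le).2.2.2.2
  · rw [fst_succ (i + 1) hi, orbit i (by omega), leftIndex_bczT (mem i (by omega)), bczT]
    ring

theorem khat_eq (h : IsExcursion p s) (hi : i < s) :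
    khat (p i) = ((leftIndex (p (i + 1)) : ℝ) + leftIndex (p i)) / 2 := by
  rw [h.2.2.1 i hi, leftIndex_bczT (h.2.1 i hi.le), khat, leftIndex]

theorem two_mul_sum_range_khat (h : IsExcursion p s) (hm : m ≤ s) :
    2 * ∑ i ∈ Finset.range m, (khat (p i) - 3) =
      ((2 * ∑ i ∈ Finset.range m, (leftIndex (p i) - 3) + leftIndex (p m) - leftIndex (p 0) : ℤ) :
        ℝ) := by
  induction m with
  | zero => simp
  | succ m ih =>
    rw [Finset.sum_range_succ, mul_add, ih (by omega), h.khat_eq hm, Finset.sum_range_succ]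
    push_cast
    ring

theorem sum_range_lt_sum_range_one (h : IsExcursion p s) (hm : 2 ≤ m) (hms : m < s) :
    ∑ i ∈ Finset.range m, (khat (p i) - 3) < ∑ i ∈ Finset.range 1, (khat (p i) - 3) := by
  have bound := h.isFareyChain.two_mul_interiorSum_add_index_lt_first
    (fun t ht hts => (h.2.2.2 t ht hts).imp_right le_of_lt) hm hms
  refine lt_of_mul_lt_mul_left ?_ (zero_le_two (α := ℝ))
  rw [h.two_mul_sum_range_khat hms.le, h.two_mul_sum_range_khat (by omega), Int.cast_lt,
    sum_range_eq_add_interiorSum (i := 0) (by omega), Finset.sum_range_one, Finset.sum_range_zero]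
  linarith

theorem sum_range_pred_lt_sum_range (h : IsExcursion p s) (hm : 0 < m) (hms : m + 2 ≤ s) :
    ∑ i ∈ Finset.range (s - 1), (khat (p i) - 3) < ∑ i ∈ Finset.range m, (khat (p i) - 3) := by
  have bound := h.isFareyChain.two_mul_interiorSum_add_index_lt_last
    (fun t ht hts => (h.2.2.2 t ht hts).imp_left le_of_lt) hm hms
  obtain ⟨s, rfl⟩ := Nat.exists_eq_add_one.mpr h.1
  rw [Nat.add_sub_cancel] at bound ⊢
  have split := sum_range_eq_add_interiorSum (K := fun i => leftIndex (p i))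
    (show m < s + 1 by omega)
  rw [Finset.sum_range_succ] at split
  refine lt_of_mul_lt_mul_left ?_ (zero_le_two (α := ℝ))
  rw [h.two_mul_sum_range_khat (by omega), h.two_mul_sum_range_khat (by omega), Int.cast_lt]
  linarith

end IsExcursion

theorem overall_monotonicity (p : ℕ → ℝ × ℝ) (s : ℕ) (h : IsExcursion p s) (hs : 4 ≤ s)
    (m : ℕ) (hm1 : 2 ≤ m) (hm2 : m ≤ s - 2) :
    ∑ i ∈ Finset.range (s - 1), (khat (p i) - 3) < ∑ i ∈ Finset.range m, (khat (p i) - 3) ∧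
      ∑ i ∈ Finset.range m, (khat (p i) - 3) < ∑ i ∈ Finset.range 1, (khat (p i) - 3) := by
  exact ⟨h.sum_range_pred_lt_sum_range (by omega) (by omega),
    h.sum_range_lt_sum_range_one hm1 (by omega)⟩
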